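/- Let G be a finite simple graph with interference degree d_I(G), and let w : V(G) → ℝ_{≥0} be vertex weights. Suppose S is a maximal independent set of G with the greedy property that every vertex v ∉ S has a neighbor u ∈ S with w(u) ≥ w(v). Then for every independent set T of G, Σ_{v∈T} w(v) ≤ d_I(G) · Σ_{u∈S} w(u). (In particular, the weight of any greedy maximal schedule is at least 1/d_I(G) times the maximum weight of an independent set.) -/

import Mathlib

open scoped BigOperators
open Filter MeasureTheory ProbabilityTheory

/-- `S` is an independent set of the interference graph `G` contained in the
set of links `J` (pairwise non-adjacent links). -/
def IsIndepIn {V : Type*} (G : SimpleGraph V) (J S : Finset V) : Prop :=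
  S ⊆ J ∧ ∀ u ∈ S, ∀ v ∈ S, ¬ G.Adj u v

/-- `S` is a maximal independent set of `J`. -/
def IsMaxIndepIn {V : Type*} (G : SimpleGraph V) (J S : Finset V) : Prop :=
  IsIndepIn G J S ∧ ∀ T, IsIndepIn G J T → S ⊆ T → S = T

/-- 0/1 indicator vector of a finite set of links. -/
def indVec {V : Type*} [DecidableEq V] (S : Finset V) : V → ℝ :=
  fun v => if v ∈ S then 1 else 0

/-- `M_{J,L}` : the (finite) set of 0/1 indicator vectors of the maximal independent
sets of `J`; the vectors are encoded in the ambient space `ℝ^V`, coordinates outside `J`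
are automatically `0`. -/
def Mset {V : Type*} [DecidableEq V] (G : SimpleGraph V) (J : Finset V) : Set (V → ℝ) :=
  indVec '' {S | IsMaxIndepIn G J S}

/-- `CH(M_{J,L})` : the convex hull of `M_{J,L}`. -/
noncomputable def CHM {V : Type*} [DecidableEq V] (G : SimpleGraph V) (J : Finset V) :
    Set (V → ℝ) :=
  convexHull ℝ (Mset G J)

/-- A fading structure `π` on the set of links: nonnegative weights summing to one. -/
def IsFading {V : Type*} [Fintype V] [DecidableEq V] (π : Finset V → ℝ) : Prop :=
  (∀ J, 0 ≤ π J) ∧ ∑ J : Finset V, π J = 1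

/-- `Φ(L) = { Σ_{J ⊆ K} π(J) η_J : η_J ∈ CH(M_{J∩L,L}) }`. -/
def Phi {V : Type*} [Fintype V] [DecidableEq V] (G : SimpleGraph V) (π : Finset V → ℝ)
    (L : Finset V) : Set (V → ℝ) :=
  {φ | ∃ η : Finset V → V → ℝ, (∀ J, η J ∈ CHM G (J ∩ L)) ∧
    φ = ∑ J : Finset V, π J • η J}

/-- The fading local pooling factor `σ*_L(π)` of a set of links `L`. -/
noncomputable def sigmaL {V : Type*} [Fintype V] [DecidableEq V] (G : SimpleGraph V)
    (π : Finset V → ℝ) (L : Finset V) : ℝ :=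
  sInf {σ : ℝ | 0 ≤ σ ∧ ∃ φ1 ∈ Phi G π L, ∃ φ2 ∈ Phi G π L, ∀ v ∈ L, φ2 v ≤ σ * φ1 v}

/-- The Fading-LPF `σ*_G(π)` of the network: minimum of `σ*_L(π)` over nonempty `L ⊆ K`. -/
noncomputable def sigmaG {V : Type*} [Fintype V] [DecidableEq V] (G : SimpleGraph V)
    (π : Finset V → ℝ) : ℝ :=
  sInf (sigmaL G π '' {L : Finset V | L.Nonempty})
/-- The marginal distribution `π_L` induced on a subset of links `L`. -/
noncomputable def marginal {V : Type*} [Fintype V] [DecidableEq V] (π : Finset V → ℝ)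
    (L J : Finset V) : ℝ :=
  ∑ I : Finset V, if I ∩ L = J then π I else 0

/-- `n(M_J)`: minimum cardinality of a maximal independent set of `J`. -/
noncomputable def nM {V : Type*} (G : SimpleGraph V) (J : Finset V) : ℕ :=
  sInf (Finset.card '' {S | IsMaxIndepIn G J S})

/-- `N(M_J)`: maximum cardinality of a maximal independent set of `J`. -/
noncomputable def NM {V : Type*} (G : SimpleGraph V) (J : Finset V) : ℕ :=
  sSup (Finset.card '' {S | IsMaxIndepIn G J S})

/-- interference degree of a link `l`: maximum cardinality of an independent set of `G`
contained in the closed neighborhood of `l`. -/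
noncomputable def dI {V : Type*} (G : SimpleGraph V) (l : V) : ℕ :=
  sSup (Finset.card '' {S : Finset V | (∀ u ∈ S, ∀ v ∈ S, ¬ G.Adj u v) ∧
    ∀ v ∈ S, v = l ∨ G.Adj l v})

/-- interference degree `d_I(G)` of the whole interference graph. -/
noncomputable def dIG {V : Type*} (G : SimpleGraph V) : ℕ :=
  sSup (Set.range (dI G))

/-- interference degree `d_I(S)` of the subgraph of `G` induced on the set of links `S`. -/
noncomputable def dISet {V : Type*} (G : SimpleGraph V) (Sset : Finset V) : ℕ :=
  sSup (Finset.card '' {T : Finset V | T ⊆ Sset ∧ (∀ u ∈ T, ∀ v ∈ T, ¬ G.Adj u v) ∧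
    ∃ l ∈ Sset, ∀ v ∈ T, v = l ∨ G.Adj l v})

/-- The throughput region `Λ_f`. -/
def LambdaF {V : Type*} [Fintype V] [DecidableEq V] (G : SimpleGraph V) (π : Finset V → ℝ) :
    Set (V → ℝ) :=
  {lam | (∀ v, 0 < lam v) ∧ ∃ η : Finset V → V → ℝ,
    (∀ J, η J ∈ CHM G J) ∧ ∀ v, lam v ≤ ∑ J : Finset V, π J * η J v}

/-- The scaled region `Λ_f(x)`. -/
def LambdaX {V : Type*} [Fintype V] [DecidableEq V] (G : SimpleGraph V) (π : Finset V → ℝ)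
    (x : Finset V → ℝ) : Set (V → ℝ) :=
  {lam | (∀ v, 0 < lam v) ∧ ∃ η : Finset V → V → ℝ,
    (∀ J, η J ∈ CHM G J) ∧ ∀ v, lam v ≤ ∑ J : Finset V, x J * π J * η J v}

/-- The standard (non-fading) local pooling factor of a graph `H`. -/
noncomputable def stdLPF (W : Type*) [Fintype W] [DecidableEq W] (H : SimpleGraph W) : ℝ :=
  sInf ((fun L => sInf {σ : ℝ | 0 ≤ σ ∧ ∃ φ1 ∈ CHM H L, ∃ φ2 ∈ CHM H L,
    ∀ v ∈ L, φ2 v ≤ σ * φ1 v}) '' {L : Finset W | L.Nonempty})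

/-- discrete measurable structure on global channel states -/
instance {α : Type*} : MeasurableSpace (Finset α) := ⊤

/-- The queue-length process `Q` evolves according to
`Q_l[t+1] = (Q_l[t] − C_l[t]·1{l ∈ S[t]})⁺ + A_l[t]`, `Q_l[0] = 0`,
where `GS t ω` is the set of 'ON' links and `S t ω` is the schedule. -/
def QueueEvol {V : Type*} [DecidableEq V] {Ω : Type*} (A : ℕ → V → Ω → ℕ)
    (GS S : ℕ → Ω → Finset V) (Q : ℕ → V → Ω → ℕ) : Prop :=
  (∀ l ω, Q 0 l ω = 0) ∧
  ∀ t l ω, Q (t + 1) l ω =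
    (Q t l ω - (if l ∈ GS t ω ∧ l ∈ S t ω then 1 else 0)) + A t l ω

/-- `S` is a greedy maximal schedule for the weights `w`: a maximal independent set of `G`
with an enumeration `s_0, …, s_{k-1}` such that each `s_i` has maximal weight among the
links neither equal nor adjacent to any of `s_0, …, s_{i-1}`. -/
def IsGreedySchedule {V : Type*} [Fintype V] [DecidableEq V] (G : SimpleGraph V)
    (w : V → ℝ) (S : Finset V) : Prop :=
  IsMaxIndepIn G Finset.univ S ∧
  ∃ s : ℕ → V, S = (Finset.range S.card).image s ∧
    (∀ i < S.card, ∀ j < S.card, s i = s j → i = j) ∧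
    ∀ i < S.card, ∀ v : V, (∀ j < i, v ≠ s j ∧ ¬ G.Adj v (s j)) → w v ≤ w (s i)

/-- A GMS policy: at every time and in every sample point, the schedule is a greedy
maximal schedule for the weights `w_l = Q_l[t]·C_l[t]`. -/
def IsGMSPolicy {V : Type*} [Fintype V] [DecidableEq V] {Ω : Type*} (G : SimpleGraph V)
    (GS S : ℕ → Ω → Finset V) (Q : ℕ → V → Ω → ℕ) : Prop :=
  ∀ t ω, IsGreedySchedule G
    (fun l => (Q t l ω : ℝ) * (if l ∈ GS t ω then 1 else 0)) (S t ω)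

/-!
Send each vertex of `T` to a vertex of `S` in its closed neighborhood of at least its weight. The
fiber over `u ∈ S` is an independent set in the closed neighborhood of `u`, so it has at most `d_I`
elements, each of weight at most `w u`.
-/

theorem sum_le_nsmul_sum_of_card_fiber_le {ι κ M : Type*} [DecidableEq κ] [AddCommMonoid M]
    [PartialOrder M] [IsOrderedAddMonoid M] {s : Finset ι} {t : Finset κ} {g : ι → κ}
    {f : ι → M} {h : κ → M} {n : ℕ} (hg : ∀ i ∈ s, g i ∈ t) (hfh : ∀ i ∈ s, f i ≤ h (g i))
    (hh : ∀ j ∈ t, 0 ≤ h j) (hn : ∀ j ∈ t, (s.filter (g · = j)).card ≤ n) :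
    ∑ i ∈ s, f i ≤ n • ∑ j ∈ t, h j :=
  calc
    ∑ i ∈ s, f i ≤ ∑ i ∈ s, h (g i) := Finset.sum_le_sum hfh
    _ = ∑ j ∈ t, (s.filter (g · = j)).card • h j := by
      simp only [← Finset.sum_fiberwise_of_maps_to' hg, Finset.sum_const]
    _ ≤ ∑ j ∈ t, n • h j :=
      Finset.sum_le_sum fun j hj ↦ nsmul_le_nsmul_left (hh j hj) (hn j hj)
    _ = n • ∑ j ∈ t, h j := Finset.sum_nsmul ..

section

variable {V : Type*} {G : SimpleGraph V} {T : Finset V} {u : V}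

theorem IsIndepIn.isIndepSet {J : Finset V} (hT : IsIndepIn G J T) : G.IsIndepSet T :=
  fun u hu v hv _ ↦ hT.2 u hu v hv

theorem card_le_dI [Finite V] (hT : G.IsIndepSet T) (hTu : ↑T ⊆ insert u (G.neighborSet u)) :
    T.card ≤ dI G u :=
  le_csSup (Set.toFinite _).bddAbove
    ⟨T, ⟨fun _ ha _ hb hab ↦ hT ha hb hab.ne hab, fun _ hv ↦ hTu hv⟩, rfl⟩

theorem dI_le_dIG [Finite V] (G : SimpleGraph V) (u : V) : dI G u ≤ dIG G :=
  le_csSup (Set.finite_range (dI G)).bddAbove ⟨u, rfl⟩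

theorem greedy_weight_bound_general {M : Type*} [AddCommMonoid M] [PartialOrder M]
    [IsOrderedAddMonoid M] {w : V → M} {S : Finset V} {d : ℕ} (hw : ∀ u ∈ S, 0 ≤ w u)
    (hgreedy : ∀ v ∉ S, ∃ u ∈ S, G.Adj u v ∧ w v ≤ w u)
    (hd : ∀ u ∈ S, ∀ F : Finset V, G.IsIndepSet F → ↑F ⊆ insert u (G.neighborSet u) → F.card ≤ d)
    (hT : G.IsIndepSet T) :
    ∑ v ∈ T, w v ≤ d • ∑ u ∈ S, w u := by
  classical
  have exists_dominating (v : V) : ∃ u ∈ S, v ∈ insert u (G.neighborSet u) ∧ w v ≤ w u := by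
    by_cases hv : v ∈ S
    · exact ⟨v, hv, Set.mem_insert v _, le_rfl⟩
    · obtain ⟨u, hu, huv, hle⟩ := hgreedy v hv
      exact ⟨u, hu, Set.mem_insert_of_mem u huv, hle⟩
  choose f hfS hf_nbhd hfw using exists_dominating
  refine sum_le_nsmul_sum_of_card_fiber_le (fun v _ ↦ hfS v) (fun v _ ↦ hfw v) hw fun u hu ↦ ?_
  have fiber_indep : G.IsIndepSet (T.filter (f · = u)) :=
    hT.mono (Finset.coe_subset.2 (Finset.filter_subset _ T))
  have fiber_subset_nbhd : ↑(T.filter (f · = u)) ⊆ insert u (G.neighborSet u) := by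
    intro v hv
    obtain rfl : f v = u := (Finset.mem_filter.1 hv).2
    exact hf_nbhd v
  exact hd u hu _ fiber_indep fiber_subset_nbhd

end

/-- If `S` is a maximal independent set with the greedy property (every excluded vertex
has a neighbor in `S` of at least its weight), then the weight of every independent set
`T` is at most `d_I(G)` times the weight of `S`. -/
theorem greedy_weight_bound {V : Type*} [Fintype V] [DecidableEq V]
    (G : SimpleGraph V) (w : V → ℝ) (hw : ∀ v, 0 ≤ w v)
    (S : Finset V) (hS : IsMaxIndepIn G Finset.univ S)
    (hgreedy : ∀ v : V, v ∉ S → ∃ u ∈ S, G.Adj u v ∧ w v ≤ w u) :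
    ∀ T : Finset V, IsIndepIn G Finset.univ T →
      ∑ v ∈ T, w v ≤ (dIG G : ℝ) * ∑ u ∈ S, w u := by
  intro T hT
  simpa only [nsmul_eq_mul] using greedy_weight_bound_general (fun u _ ↦ hw u) hgreedy
    (fun u _ _ hF hFu ↦ (card_le_dI hF hFu).trans (dI_le_dIG G u)) hT.isIndepSet
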